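/- Fix δ > 0 and ε > 0. Then there exist C > 0, η > 0 and n₀ such that for all n ≥ n₀, all p ∈ [δ, 1−δ], all k with k/n ∈ [δ, 1−δ], and any fixed k-element set S ⊆ [n], with probability at least 1 − exp(−n^η) over G = G_{n,p} the following three bounds all hold, where x is uniform on S and x̄ is uniform on S̄: |Var_x d_S(x) − p(1−p)k| ≤ C·n^{1/2+ε}; |Var_{x̄} d_S(x̄) − p(1−p)k| ≤ C·n^{1/2+ε}; and |Cov_{x̄}(d_S(x̄), d_{S̄}(x̄))| = |E_{x̄}[d_S(x̄)·d_{S̄}(x̄)] − E_{x̄}[d_S(x̄)]·E_{x̄}[d_{S̄}(x̄)]| ≤ C·n^{1/2+ε}. -/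

import Mathlib

/-!
If `e` ranges over the possible edges and `X e` is the centred indicator of `e`, then `d_B(x)` is a
constant plus the sum of `X e` over the star from `x` to `B`. For `x` uniform on `A`, the covariance
of `d_B(x)` and `d_{B'}(x)` is therefore the product of two stars averaged over `A`, minus a product
of two linear forms. Since `X e ^ 2 = p (1 - p) + (1 - 2 p) X e`, the diagonal terms of that product
give the mean `p (1 - p) |B ∩ B'|` plus a third linear form, and the off-diagonal terms form a
quadratic form in independent variables. An edge lies in at most two stars, so all coefficients are
bounded. The linear forms are sub-Gaussian. Ordering the edges makes the quadratic form a sum of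
`Z e * X e` with `Z e` determined by the earlier edges; each `Z e` is a linear form and so rarely
exceeds its typical size, and once the `Z e` are truncated there the sum is sub-Gaussian as well.
-/

open Finset MeasureTheory ProbabilityTheory

noncomputable section

/-- Uniform probability of an event `P` over a finite sample space `Ω`. -/
def Pru {α : Type*} (Ω : Finset α) (P : α → Prop) : ℝ := by
  classical exact ((Ω.filter P).card : ℝ) / Ω.card

/-- Expectation of `f` under the uniform distribution on `Ω`. -/
def Exu {α : Type*} (Ω : Finset α) (f : α → ℝ) : ℝ := (∑ a ∈ Ω, f a) / Ω.card

/-- Variance of `f` under the uniform distribution on `Ω`. -/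
def Varu {α : Type*} (Ω : Finset α) (f : α → ℝ) : ℝ := Exu Ω (fun a => (f a - Exu Ω f) ^ 2)

/-- Conditional expectation of `f` given the value of `g`, under uniform distribution on `Ω`. -/
def condExpU {α β : Type*} (Ω : Finset α) (f : α → ℝ) (g : α → β) (ω : α) : ℝ := by
  classical exact Exu (Ω.filter (fun ω' => g ω' = g ω)) f

/-- The edge set of the complete graph on `[n]`. -/
def completeEdges (n : ℕ) : Finset (Sym2 (Fin n)) := by
  classical exact Finset.univ.filter (fun e => ¬ e.IsDiag)

/-- A finset of `Sym2`s is a graph if it has no loops. -/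
def IsGraph {n : ℕ} (G : Finset (Sym2 (Fin n))) : Prop := ∀ e ∈ G, ¬ e.IsDiag

/-- The sample space of `G_{n,M}`: all graphs on `[n]` with exactly `M` edges. -/
def graphsM (n M : ℕ) : Finset (Finset (Sym2 (Fin n))) := by
  classical exact (completeEdges n).powerset.filter (fun G => G.card = M)

/-- `e(S)`: number of edges of `G` with both endpoints in `S`. -/
def edgesIn {n : ℕ} (G : Finset (Sym2 (Fin n))) (S : Finset (Fin n)) : ℕ := by
  classical exact (G.filter (fun e => ∀ v ∈ e, v ∈ S)).card

/-- `d_S(v)`: number of neighbours of `v` (in graph `G`) lying in `S`. -/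
def dS {n : ℕ} (G : Finset (Sym2 (Fin n))) (S : Finset (Fin n)) (v : Fin n) : ℕ := by
  classical exact (S.filter (fun w => s(v, w) ∈ G)).card

/-- All `k`-element subsets of `[n]`. -/
def kSets (n k : ℕ) : Finset (Finset (Fin n)) := Finset.univ.powersetCard k

/-- Probability of an event under the uniform random graph `G_{n,M}`. -/
def PrGnM (n M : ℕ) (P : Finset (Sym2 (Fin n)) → Prop) : ℝ := Pru (graphsM n M) P

/-- Probability of an event under the binomial random graph `G_{n,p}`. -/
def PrGnp (n : ℕ) (p : ℝ) (P : Finset (Sym2 (Fin n)) → Prop) : ℝ := by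
  classical exact ∑ G ∈ (completeEdges n).powerset,
    if (P G) then p ^ G.card * (1 - p) ^ ((completeEdges n).card - G.card) else 0

/-- `N = n(n-1)/2` as a real number. -/
def Nr (n : ℕ) : ℝ := (n : ℝ) * ((n : ℝ) - 1) / 2

/-- `K = k(k-1)/2` as a real number. -/
def Kr (k : ℕ) : ℝ := (k : ℝ) * ((k : ℝ) - 1) / 2

/-- `λ = ((n²-k²)k²/(2n⁴))·(M(N-M)/N²)`. -/
def lamP (n M k : ℕ) : ℝ :=
  (((n:ℝ)^2 - (k:ℝ)^2) * (k:ℝ)^2 / (2 * (n:ℝ)^4)) * ((M:ℝ) * (Nr n - (M:ℝ)) / (Nr n)^2)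

/-- The mean `K·M/N`. -/
def muP (n M k : ℕ) : ℝ := Kr k * (M:ℝ) / Nr n

/-- `W = (e(S) - K·M/N)/n`. -/
def Wfun (n M k : ℕ) (G : Finset (Sym2 (Fin n))) (S : Finset (Fin n)) : ℝ :=
  ((edgesIn G S : ℝ) - muP n M k) / n

/-- `V = Σ_v d(v)² - n·d(G)²`, i.e. `n` times the degree variance. -/
def Vdeg {n : ℕ} (G : Finset (Sym2 (Fin n))) : ℝ :=
  (∑ v : Fin n, (dS G Finset.univ v : ℝ) ^ 2) - (n:ℝ) * (2 * (G.card : ℝ) / n) ^ 2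

/-- Gaussian CDF with mean `m` and variance `v`. -/
def gaussCdf (m v z : ℝ) : ℝ := ((gaussianReal m v.toNNReal) (Set.Iic z)).toReal

/-- Gaussian measure of a set, mean `m`, variance `v`. -/
def gaussMeas (m v : ℝ) (A : Set ℝ) : ℝ := ((gaussianReal m v.toNNReal) A).toReal

/-- Gaussian density with mean `m` and variance `v`. -/
def gaussPdf (m v x : ℝ) : ℝ := gaussianPDFReal m v.toNNReal x

/-- `P(Y ∈ ·)` for `Y ~ Bin(ν, p)`. -/
def binomPr (ν : ℕ) (p : ℝ) (P : ℕ → Prop) : ℝ := by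
  classical exact ∑ j ∈ Finset.range (ν + 1),
    if (P j) then (ν.choose j : ℝ) * p ^ j * (1 - p) ^ (ν - j) else 0

/-- Sample space for "uniform `k`-set `S`, then uniform `x ∈ S` and `x̄ ∈ S̄`". -/
def SwapΩ (n k : ℕ) : Finset (Σ _ : Finset (Fin n), Fin n × Fin n) :=
  (kSets n k).sigma (fun S => S ×ˢ Sᶜ)

/-- A triple `(a, r, t)` is valid for `β`. -/
def ValidTriple (β : ℝ) (n a r t : ℕ) : Prop :=
  a ≤ r ∧
  (∃ c : ℝ, 1/2 ≤ c ∧ c ≤ 1 ∧ (a : ℝ) = c * (t:ℝ) ^ ((3:ℝ)/2) * (n:ℝ) ^ (2*β - 1/2)) ∧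
  (r : ℝ) ≤ (n:ℝ) ^ (-β) * Real.sqrt ((n:ℝ) * (t:ℝ))

open scoped NNReal

section SubGaussian

variable {Ω ι : Type*} {mΩ : MeasurableSpace Ω} {μ : Measure Ω}

lemma hasSubgaussianMGF_mono {X : Ω → ℝ} {c d : ℝ≥0} (hX : HasSubgaussianMGF X c μ)
    (hcd : c ≤ d) : HasSubgaussianMGF X d μ where
  integrable_exp_mul := hX.integrable_exp_mul
  mgf_le t := (hX.mgf_le t).trans <| by gcongr

lemma hasSubgaussianMGF_iff_lintegral_le {X : Ω → ℝ} {c : ℝ≥0} (hX : AEMeasurable X μ) :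
    HasSubgaussianMGF X c μ ↔ ∀ t : ℝ,
      ∫⁻ ω, ENNReal.ofReal (Real.exp (t * X ω)) ∂μ ≤
        ENNReal.ofReal (Real.exp (c * t ^ 2 / 2)) := by
  have hmeas (t : ℝ) : AEStronglyMeasurable (fun ω => Real.exp (t * X ω)) μ :=
    (Real.measurable_exp.comp_aemeasurable (hX.const_mul t)).aestronglyMeasurable
  have hnonneg (t : ℝ) : 0 ≤ᵐ[μ] fun ω => Real.exp (t * X ω) := .of_forall fun _ => by positivity
  constructor
  · intro h t
    rw [← ofReal_integral_eq_lintegral_ofReal (h.integrable_exp_mul t) (hnonneg t)]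
    exact ENNReal.ofReal_le_ofReal (h.mgf_le t)
  · intro h
    refine ⟨fun t => ?_, fun t => ?_⟩
    · exact (lintegral_ofReal_ne_top_iff_integrable (hmeas t) (hnonneg t)).1
        ((h t).trans_lt ENNReal.ofReal_lt_top).ne
    · rw [mgf, integral_eq_lintegral_of_nonneg_ae (hnonneg t) (hmeas t)]
      exact ENNReal.toReal_le_of_le_ofReal (by positivity) (h t)

lemma lintegral_comp_prodMk_of_indepFun {α β : Type*} [MeasurableSpace α] [MeasurableSpace β]
    [IsFiniteMeasure μ] {Z : Ω → α} {X : Ω → β} (hZ : AEMeasurable Z μ) (hX : AEMeasurable X μ)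
    (hind : IndepFun Z X μ) {F : α × β → ENNReal} (hF : Measurable F) :
    ∫⁻ ω, F (Z ω, X ω) ∂μ = ∫⁻ ω, ∫⁻ ω', F (Z ω, X ω') ∂μ ∂μ := by
  rw [← lintegral_map' hF.aemeasurable (hZ.prodMk hX),
    (indepFun_iff_map_prod_eq_prod_map_map hZ hX).1 hind, lintegral_prod _ hF.aemeasurable,
    lintegral_map' hF.lintegral_prod_right'.aemeasurable hZ]
  exact lintegral_congr fun ω =>
    lintegral_map' (hF.comp measurable_prodMk_left).aemeasurable hX

/-- Conditionally on `(Y, a)`, the summand `a * X` is sub-Gaussian with parameter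
`a ^ 2 * d ≤ T ^ 2 * d`. -/
lemma hasSubgaussianMGF_add_mul_of_indepFun [IsFiniteMeasure μ] {X Y a : Ω → ℝ} {c d T : ℝ≥0}
    (hY : HasSubgaussianMGF Y c μ) (hX : HasSubgaussianMGF X d μ) (ha : AEMeasurable a μ)
    (haT : ∀ ω, |a ω| ≤ T) (hind : IndepFun (fun ω => (Y ω, a ω)) X μ) :
    HasSubgaussianMGF (fun ω => Y ω + a ω * X ω) (c + T ^ 2 * d) μ := by
  have hYm := hY.aemeasurable
  have hXm := hX.aemeasurable
  refine (hasSubgaussianMGF_iff_lintegral_le (by fun_prop)).2 fun t => ?_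
  let F : (ℝ × ℝ) × ℝ → ENNReal := fun z =>
    ENNReal.ofReal (Real.exp (t * (z.1.1 + z.1.2 * z.2)))
  have hF : Measurable F := by fun_prop
  have hfibre (ω : Ω) : ∫⁻ ω', F ((Y ω, a ω), X ω') ∂μ ≤
      ENNReal.ofReal (Real.exp (t * Y ω)) * ENNReal.ofReal (Real.exp (T ^ 2 * d * t ^ 2 / 2)) := by
    have hsplit (ω' : Ω) : F ((Y ω, a ω), X ω') =
        ENNReal.ofReal (Real.exp (t * Y ω)) * ENNReal.ofReal (Real.exp (t * a ω * X ω')) := by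
      rw [← ENNReal.ofReal_mul (by positivity), ← Real.exp_add]; simp only [F]; ring_nf
    have ha2 : a ω ^ 2 ≤ (T : ℝ) ^ 2 := sq_le_sq.2 ((haT ω).trans (le_abs_self _))
    simp_rw [hsplit]
    rw [lintegral_const_mul' _ _ ENNReal.ofReal_ne_top]
    gcongr
    refine ((hasSubgaussianMGF_iff_lintegral_le hXm).1 hX (t * a ω)).trans ?_
    refine ENNReal.ofReal_le_ofReal (Real.exp_le_exp.2 (div_le_div_of_nonneg_right ?_ two_pos.le))
    calc (d : ℝ) * (t * a ω) ^ 2 = a ω ^ 2 * d * t ^ 2 := by ring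
      _ ≤ T ^ 2 * d * t ^ 2 := by gcongr
  calc ∫⁻ ω, F ((Y ω, a ω), X ω) ∂μ
      = ∫⁻ ω, ∫⁻ ω', F ((Y ω, a ω), X ω') ∂μ ∂μ :=
        lintegral_comp_prodMk_of_indepFun (hYm.prodMk ha) hXm hind hF
    _ ≤ ∫⁻ ω, ENNReal.ofReal (Real.exp (t * Y ω)) *
          ENNReal.ofReal (Real.exp (T ^ 2 * d * t ^ 2 / 2)) ∂μ := lintegral_mono hfibre
    _ ≤ ENNReal.ofReal (Real.exp (c * t ^ 2 / 2)) *
          ENNReal.ofReal (Real.exp (T ^ 2 * d * t ^ 2 / 2)) := by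
        rw [lintegral_mul_const' _ _ ENNReal.ofReal_ne_top]
        gcongr
        exact (hasSubgaussianMGF_iff_lintegral_le hYm).1 hY t
    _ = ENNReal.ofReal (Real.exp ((c + T ^ 2 * d : ℝ≥0) * t ^ 2 / 2)) := by
        rw [← ENNReal.ofReal_mul (by positivity), ← Real.exp_add]; push_cast; ring_nf

lemma measureReal_lt_abs_le_of_hasSubgaussianMGF [IsFiniteMeasure μ] {X : Ω → ℝ} {c : ℝ≥0}
    (hX : HasSubgaussianMGF X c μ) {s : ℝ} (hs : 0 ≤ s) :
    μ.real {ω | s < |X ω|} ≤ 2 * Real.exp (-s ^ 2 / (2 * c)) := by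
  have hsub : {ω | s < |X ω|} ⊆ {ω | s ≤ X ω} ∪ {ω | s ≤ (-X) ω} := fun ω hω =>
    (lt_abs.1 (show s < |X ω| from hω)).imp le_of_lt le_of_lt
  calc μ.real {ω | s < |X ω|}
      ≤ μ.real {ω | s ≤ X ω} + μ.real {ω | s ≤ (-X) ω} :=
        (measureReal_mono hsub).trans (measureReal_union_le _ _)
    _ ≤ 2 * Real.exp (-s ^ 2 / (2 * c)) := by
        linarith [hX.measure_ge_le hs, hX.neg.measure_ge_le hs]

/-- Azuma's inequality: the coefficient `a i` is known before `X i` is revealed. -/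
lemma hasSubgaussianMGF_sum_mul_of_predictable [LinearOrder ι] [IsProbabilityMeasure μ]
    {X a : ι → Ω → ℝ} {c : ι → ℝ≥0} {T : ι → ℝ≥0} (hXm : ∀ i, Measurable (X i))
    (hind : iIndepFun X μ) {s : Finset ι} (hX : ∀ i ∈ s, HasSubgaussianMGF (X i) (c i) μ)
    (ha : ∀ i, Measurable[⨆ j < i, MeasurableSpace.comap (X j) inferInstance] (a i))
    (haT : ∀ i ω, |a i ω| ≤ T i) :
    HasSubgaussianMGF (fun ω => ∑ i ∈ s, a i ω * X i ω) (∑ i ∈ s, T i ^ 2 * c i) μ := by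
  let ℱ : ι → MeasurableSpace Ω := fun i => ⨆ j < i, MeasurableSpace.comap (X j) inferInstance
  have hℱ_le (i : ι) : ℱ i ≤ mΩ := iSup₂_le fun j _ => (hXm j).comap_le
  have hX_past {i j : ι} (hji : j < i) : Measurable[ℱ i] (X j) :=
    (comap_measurable (X j)).mono (le_iSup₂_of_le j hji le_rfl) le_rfl
  have hℱ_mono {i j : ι} (hji : j < i) : ℱ j ≤ ℱ i :=
    iSup₂_le fun l hl => le_iSup₂_of_le l (hl.trans hji) le_rfl
  have hindep (m : ι) : Indep (ℱ m) (MeasurableSpace.comap (X m) inferInstance) μ := by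
    have := indep_iSup_of_disjoint (fun i => (hXm i).comap_le) hind
      (S := Set.Iio m) (T := {m}) (by simp)
    simpa [ℱ] using this
  induction s using Finset.induction_on_max with
  | empty => simp
  | insert m s hlt ih =>
    have hm : m ∉ s := fun h => (hlt m h).false
    have hY : Measurable[ℱ m] fun ω => ∑ i ∈ s, a i ω * X i ω :=
      Finset.measurable_fun_sum s fun i hi =>
        ((ha i).mono (hℱ_mono (hlt i hi)) le_rfl).mul (hX_past (hlt i hi))
    have hpair : IndepFun (fun ω => (∑ i ∈ s, a i ω * X i ω, a m ω)) (X m) μ :=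
      indep_of_indep_of_le_left (hindep m) (hY.prodMk (ha m)).comap_le
    have hsum := ih fun i hi => hX i (mem_insert_of_mem hi)
    simp only [sum_insert hm, add_comm (a m _ * _), add_comm (T m ^ 2 * _)]
    exact hasSubgaussianMGF_add_mul_of_indepFun hsum (hX m (mem_insert_self m s))
      ((ha m).mono (hℱ_le m) le_rfl).aemeasurable (haT m) hpair

end SubGaussian

section QuadraticForm

variable {Ω ι : Type*} {mΩ : MeasurableSpace Ω} {μ : Measure Ω}

lemma measureReal_lt_abs_linearForm_le [IsFiniteMeasure μ] {X : ι → Ω → ℝ} {σ : ℝ≥0}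
    (hind : iIndepFun X μ) {E : Finset ι} (hX : ∀ i ∈ E, HasSubgaussianMGF (X i) σ μ)
    (c : ι → ℝ) {V : ℝ} (hV : ∑ i ∈ E, c i ^ 2 ≤ V) {s : ℝ} (hs : 0 ≤ s) :
    μ.real {ω | s < |∑ i ∈ E, c i * X i ω|} ≤ 2 * Real.exp (-s ^ 2 / (2 * (V * σ))) := by
  lift V to ℝ≥0 using (sum_nonneg fun i _ => sq_nonneg (c i)).trans hV
  have hterm (i : ι) (hi : i ∈ E) :
      HasSubgaussianMGF (fun ω => c i * X i ω) (‖c i‖₊ ^ 2 * σ) μ := by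
    convert (hX i hi).const_mul (c i)
    exact congrArg (· * σ) (Subtype.ext (sq_abs (c i)) : ‖c i‖₊ ^ 2 = ⟨c i ^ 2, sq_nonneg (c i)⟩)
  have hparam : ∑ i ∈ E, ‖c i‖₊ ^ 2 * σ ≤ V * σ := by
    rw [← sum_mul]
    gcongr
    exact NNReal.coe_le_coe.1 (by simpa using hV)
  have hsum := hasSubgaussianMGF_mono (HasSubgaussianMGF.sum_of_iIndepFun
    (hind.comp (fun i x => c i * x) fun i => measurable_const_mul (c i)) hterm) hparam
  exact_mod_cast measureReal_lt_abs_le_of_hasSubgaussianMGF hsum hs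

lemma sum_sum_ne_eq_sum_sum_lt [LinearOrder ι] (E : Finset ι) (g : ι → ι → ℝ) :
    ∑ e ∈ E, ∑ f ∈ E with f ≠ e, g e f = ∑ e ∈ E, ∑ f ∈ E with f < e, (g e f + g f e) := by
  have hsplit (e : ι) : ∑ f ∈ E with f ≠ e, g e f =
      ∑ f ∈ E with f < e, g e f + ∑ f ∈ E with e < f, g e f := by
    simp only [ne_iff_lt_or_gt]
    rw [filter_or, sum_union (disjoint_filter.2 fun f _ h => h.not_gt)]
  have hswap : ∑ e ∈ E, ∑ f ∈ E with e < f, g e f = ∑ e ∈ E, ∑ f ∈ E with f < e, g f e :=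
    sum_comm' (by grind)
  simp only [hsplit, sum_add_distrib, hswap]

/-- Truncating the coefficients at level `T` keeps them predictable, and changes nothing off the
event that one of them exceeds `T`. -/
lemma measureReal_lt_abs_sum_mul_le_of_predictable [LinearOrder ι] [IsProbabilityMeasure μ]
    {X Z : ι → Ω → ℝ} {σ : ℝ≥0} (hXm : ∀ i, Measurable (X i)) (hind : iIndepFun X μ)
    {E : Finset ι} (hX : ∀ i ∈ E, HasSubgaussianMGF (X i) σ μ)
    (hZ : ∀ i, Measurable[⨆ j < i, MeasurableSpace.comap (X j) inferInstance] (Z i))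
    {T V : ℝ} (hT : 0 ≤ T) (hV : #E * T ^ 2 ≤ V) {s : ℝ} (hs : 0 ≤ s) :
    μ.real {ω | s < |∑ i ∈ E, Z i ω * X i ω|} ≤
      ∑ i ∈ E, μ.real {ω | T < |Z i ω|} + 2 * Real.exp (-s ^ 2 / (2 * (V * σ))) := by
  lift V to ℝ≥0 using le_trans (by positivity) hV
  lift T to ℝ≥0 using hT
  let Z' : ι → Ω → ℝ := fun i ω => max (-T) (min T (Z i ω))
  have hZ'_past (i : ι) :
      Measurable[⨆ j < i, MeasurableSpace.comap (X j) inferInstance] (Z' i) :=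
    measurable_const.max (measurable_const.min (hZ i))
  have hZ'_le (i : ι) (ω : Ω) : |Z' i ω| ≤ T :=
    abs_le.2 ⟨le_max_left _ _, max_le (neg_le_self T.2) (min_le_left _ _)⟩
  have hparam : ∑ _i ∈ E, T ^ 2 * σ ≤ V * σ := by
    rw [sum_const, nsmul_eq_mul, ← mul_assoc]
    gcongr
    exact_mod_cast hV
  have htail := measureReal_lt_abs_le_of_hasSubgaussianMGF (hasSubgaussianMGF_mono
    (hasSubgaussianMGF_sum_mul_of_predictable hXm hind hX hZ'_past hZ'_le) hparam) hs
  have hcover : {ω | s < |∑ i ∈ E, Z i ω * X i ω|} ⊆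
      (⋃ i ∈ E, {ω | T < |Z i ω|}) ∪ {ω | s < |∑ i ∈ E, Z' i ω * X i ω|} := by
    intro ω hω
    by_cases hbad : ∃ i ∈ E, T < |Z i ω|
    · exact .inl (by simpa using hbad)
    · push Not at hbad
      have hsum : ∑ i ∈ E, Z' i ω * X i ω = ∑ i ∈ E, Z i ω * X i ω :=
        sum_congr rfl fun i hi => by
          obtain ⟨hl, hr⟩ := abs_le.1 (hbad i hi)
          simp only [Z', min_eq_right hr, max_eq_right hl]
      exact .inr (by rwa [Set.mem_ofPred_eq, hsum])
  refine (measureReal_mono hcover).trans <| (measureReal_union_le _ _).trans <|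
    add_le_add (measureReal_biUnion_finset_le _ _) ?_
  exact_mod_cast htail

lemma measureReal_lt_abs_triangularForm_le [LinearOrder ι] [IsProbabilityMeasure μ]
    {X : ι → Ω → ℝ} {σ : ℝ≥0} (hXm : ∀ i, Measurable (X i)) (hind : iIndepFun X μ)
    {E : Finset ι} (hX : ∀ i ∈ E, HasSubgaussianMGF (X i) σ μ) (c : ι → ι → ℝ)
    {R T V : ℝ} (hR : ∀ e ∈ E, ∑ f ∈ E, c e f ^ 2 ≤ R) (hT : 0 ≤ T) (hV : #E * T ^ 2 ≤ V) {s : ℝ}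
    (hs : 0 ≤ s) :
    μ.real {ω | s < |∑ e ∈ E, (∑ f ∈ E with f < e, c e f * X f ω) * X e ω|} ≤
      #E * (2 * Real.exp (-T ^ 2 / (2 * (R * σ)))) + 2 * Real.exp (-s ^ 2 / (2 * (V * σ))) := by
  have hpast (e : ι) : Measurable[⨆ j < e, MeasurableSpace.comap (X j) inferInstance]
      fun ω => ∑ f ∈ E with f < e, c e f * X f ω :=
    Finset.measurable_fun_sum _ fun f hf =>
      ((comap_measurable (X f)).mono (le_iSup₂_of_le f (mem_filter.1 hf).2 le_rfl)
        le_rfl).const_mul _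
  have hrow (e : ι) (he : e ∈ E) : μ.real {ω | T < |∑ f ∈ E with f < e, c e f * X f ω|} ≤
      2 * Real.exp (-T ^ 2 / (2 * (R * σ))) :=
    measureReal_lt_abs_linearForm_le hind (fun i hi => hX i (mem_filter.1 hi).1) (c e)
      ((sum_le_sum_of_subset_of_nonneg (filter_subset _ _) fun _ _ _ => sq_nonneg _).trans
        (hR e he)) hT
  refine (measureReal_lt_abs_sum_mul_le_of_predictable hXm hind hX hpast hT hV hs).trans ?_
  gcongr
  exact (sum_le_card_nsmul _ _ _ hrow).trans_eq (nsmul_eq_mul _ _)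

lemma measureReal_lt_abs_offDiagForm_le [DecidableEq ι] [IsProbabilityMeasure μ]
    {X : ι → Ω → ℝ} {σ : ℝ≥0} (hXm : ∀ i, Measurable (X i)) (hind : iIndepFun X μ)
    {E : Finset ι} (hX : ∀ i ∈ E, HasSubgaussianMGF (X i) σ μ) (M : ι → ι → ℝ)
    {R T V : ℝ} (hR : ∀ e ∈ E, ∑ f ∈ E, (M e f + M f e) ^ 2 ≤ R) (hT : 0 ≤ T)
    (hV : #E * T ^ 2 ≤ V) {s : ℝ} (hs : 0 ≤ s) :
    μ.real {ω | s < |∑ e ∈ E, ∑ f ∈ E with f ≠ e, M e f * (X e ω * X f ω)|} ≤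
      #E * (2 * Real.exp (-T ^ 2 / (2 * (R * σ)))) + 2 * Real.exp (-s ^ 2 / (2 * (V * σ))) := by
  obtain ⟨_, -⟩ := exists_wellFoundedLT ι
  have hform (ω : Ω) : ∑ e ∈ E, ∑ f ∈ E with f ≠ e, M e f * (X e ω * X f ω) =
      ∑ e ∈ E, (∑ f ∈ E with f < e, (M e f + M f e) * X f ω) * X e ω := by
    calc _ = ∑ e ∈ E, ∑ f ∈ E with f < e, (M e f * (X e ω * X f ω) + M f e * (X f ω * X e ω)) := by
          convert sum_sum_ne_eq_sum_sum_lt E fun e f => M e f * (X e ω * X f ω)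
      _ = _ := sum_congr rfl fun e _ => by
          rw [sum_mul]
          exact sum_congr rfl fun f _ => by ring
  simp only [hform]
  exact measureReal_lt_abs_triangularForm_le hXm hind hX _ hR hT hV hs

end QuadraticForm

section RandomSet

open scoped unitInterval

variable {ι : Type*} {u : Set ι} {p : I} {i : ι}

/-- The `i`-th coordinate of a random set whose elements are kept with probability `p`,
centred at its mean. -/
def centredIndicator (p : ℝ) (i : ι) (s : Set ι) : ℝ := s.indicator 1 i - p

lemma measurable_indicator_one_apply (i : ι) :
    Measurable fun s : Set ι => s.indicator (1 : ι → ℝ) i :=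
  Measurable.ite (measurable_set_mem i).setOf measurable_const measurable_const

lemma measurable_centredIndicator (p : ℝ) (i : ι) : Measurable (centredIndicator p i) :=
  (measurable_indicator_one_apply i).sub_const p

lemma sq_centredIndicator (p : ℝ) (i : ι) (s : Set ι) :
    centredIndicator p i s ^ 2 = p * (1 - p) + (1 - 2 * p) * centredIndicator p i s := by
  by_cases hi : i ∈ s <;> simp [centredIndicator, hi] <;> ring

lemma setBernoulli_real_mem (p : I) (hi : i ∈ u) : setBer(u, p).real {s | i ∈ s} = p := by
  have hmap := Measure.infinitePi_map_eval (fun i : ι =>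
    unitInterval.toNNReal p • Measure.dirac (i ∈ u) +
      unitInterval.toNNReal (σ p) • Measure.dirac False) i
  rw [measureReal_def, setBernoulli_apply']
  have hpre : (fun q : ι → Prop => {j | q j}) ⁻¹' {s | i ∈ s} = (fun q => q i) ⁻¹' {True} := by
    ext; simp
  rw [hpre, ← Measure.map_apply (by fun_prop) (.of_discrete), hmap]
  simp [hi]

lemma iIndepFun_map {Ω Ω' κ : Type*} {mΩ : MeasurableSpace Ω} {mΩ' : MeasurableSpace Ω'}
    {P : Measure Ω} [IsProbabilityMeasure P]
    {φ : Ω → Ω'} (hφ : Measurable φ) {X : κ → Ω' → ℝ} (hX : ∀ i, Measurable (X i))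
    (h : iIndepFun (fun i ω => X i (φ ω)) P) : iIndepFun X (P.map φ) := by
  have := Measure.isProbabilityMeasure_map hφ.aemeasurable (μ := P)
  rw [iIndepFun_iff_map_fun_eq_infinitePi_map hX, Measure.map_map (by fun_prop) hφ]
  simp_rw [Measure.map_map (hX _) hφ]
  exact (iIndepFun_iff_map_fun_eq_infinitePi_map fun i => (hX i).comp hφ).1 h

lemma iIndepFun_centredIndicator (u : Set ι) (p : I) (q : ℝ) :
    iIndepFun (centredIndicator q) setBer(u, p) := by
  rw [setBernoulli_eq_map]
  refine iIndepFun_map MeasurableEquiv.setOfPred.measurable (measurable_centredIndicator q) ?_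
  exact iIndepFun_infinitePi (X := fun i (P : Prop) => centredIndicator q i {_j | P})
    fun _ => .of_discrete

lemma hasSubgaussianMGF_centredIndicator (hi : i ∈ u) :
    HasSubgaussianMGF (centredIndicator (p : ℝ) i) (1 / 4) setBer(u, p) := by
  have hmean : ∫ s, s.indicator (1 : ι → ℝ) i ∂setBer(u, p) = p := by
    rw [← setBernoulli_real_mem p hi, ← integral_indicator_one (measurable_set_mem i).setOf]
    rfl
  have h := hasSubgaussianMGF_of_mem_Icc (μ := setBer(u, p)) (a := 0) (b := 1)
    (measurable_indicator_one_apply i).aemeasurable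
    (.of_forall fun s => ⟨Set.indicator_nonneg (by simp) i, Set.indicator_le_self' (by simp) i⟩)
  simp only [hmean, sub_zero, nnnorm_one] at h
  rwa [show ((1 : ℝ≥0) / 2) ^ 2 = 1 / 4 by norm_num] at h

lemma PrGnp_eq_setBernoulli_real (n : ℕ) (p : I) (P : Finset (Sym2 (Fin n)) → Prop) :
    PrGnp n p P = setBer(↑(completeEdges n), p).real {s | P s.toFinite.toFinset} := by
  classical
  let 𝒢 := {G ∈ (completeEdges n).powerset | P G}
  have hsupp : {s ∈ {s : Set (Sym2 (Fin n)) | P s.toFinite.toFinset} | s ⊆ completeEdges n} =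
      (𝒢.image ((↑) : Finset (Sym2 (Fin n)) → Set (Sym2 (Fin n))) : Set _) := by
    ext s
    lift s to Finset (Sym2 (Fin n)) using s.toFinite
    simp [𝒢, and_comm]
  rw [measureReal_def, setBernoulli_apply_eq_apply_subsets, hsupp, ← measureReal_def,
    ← sum_measureReal_singleton, sum_image coe_injective.injOn, sum_filter, PrGnp]
  refine sum_congr rfl fun G hG => ?_
  have hGE : (G : Set (Sym2 (Fin n))) ⊆ completeEdges n := mod_cast mem_powerset.1 hG
  rw [setBernoulli_real_singleton p hGE (finite_toSet _), Set.ncard_coe_finset, ← coe_sdiff,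
    Set.ncard_coe_finset, card_sdiff_of_subset (mem_powerset.1 hG)]

end RandomSet

section Covariance

variable {α : Type*} {A : Finset α}

/-- Covariance of `f` and `g` under the uniform distribution on `A`. -/
def Covu (A : Finset α) (f g : α → ℝ) : ℝ := Exu A (fun x => f x * g x) - Exu A f * Exu A g

lemma Exu_add (A : Finset α) (f g : α → ℝ) : Exu A (fun x => f x + g x) = Exu A f + Exu A g := by
  simp only [Exu, sum_add_distrib, add_div]

lemma Exu_const_mul (A : Finset α) (c : ℝ) (f : α → ℝ) :
    Exu A (fun x => c * f x) = c * Exu A f := by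
  simp only [Exu, ← mul_sum, mul_div_assoc]

lemma Exu_const (hA : A.Nonempty) (c : ℝ) : Exu A (fun _ => c) = c := by
  have : (#A : ℝ) ≠ 0 := mod_cast hA.card_ne_zero
  simp [Exu, this]

lemma Covu_comm (A : Finset α) (f g : α → ℝ) : Covu A f g = Covu A g f := by
  simp only [Covu, mul_comm]

lemma Covu_add_const_left (hA : A.Nonempty) (f g : α → ℝ) (c : ℝ) :
    Covu A (fun x => f x + c) g = Covu A f g := by
  simp only [Covu, add_mul, Exu_add, Exu_const_mul, Exu_const hA]
  ring

lemma Covu_congr {f f' g g' : α → ℝ} (hf : ∀ x ∈ A, f x = f' x) (hg : ∀ x ∈ A, g x = g' x) :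
    Covu A f g = Covu A f' g' := by
  have hfg : ∀ x ∈ A, f x * g x = f' x * g' x := fun x hx => by rw [hf x hx, hg x hx]
  simp only [Covu, Exu, sum_congr rfl hf, sum_congr rfl hg, sum_congr rfl hfg]

lemma Varu_eq_Covu (hA : A.Nonempty) (f : α → ℝ) : Varu A f = Covu A f f := by
  have hsq (x : α) : (f x - Exu A f) ^ 2 =
      f x * f x + ((-2 * Exu A f) * f x + Exu A f ^ 2) := by ring
  simp only [Varu, Covu, hsq, Exu_add, Exu_const_mul, Exu_const hA]
  ring

end Covariance

section Incidence

variable {κ ι : Type*} [DecidableEq ι] {A : Finset κ} {I J : κ → Finset ι} {E : Finset ι} {b d : ℕ}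

/-- The number of members of the family `I`, indexed by `A`, that contain `e`. -/
def incidenceCount (A : Finset κ) (I : κ → Finset ι) (e : ι) : ℕ := #{x ∈ A | e ∈ I x}

lemma sum_sum_eq_sum_incidenceCount_mul (hI : ∀ x ∈ A, I x ⊆ E) (g : ι → ℝ) :
    ∑ x ∈ A, ∑ e ∈ I x, g e = ∑ e ∈ E, incidenceCount A I e * g e := by
  rw [sum_comm' (t' := E) (s' := fun e => {x ∈ A | e ∈ I x})
    fun x e => by simpa using fun hx he => hI x hx he]
  simp only [sum_const, nsmul_eq_mul, incidenceCount]

lemma sum_sum_sum_ne_eq_sum_incidenceCount_mul (hI : ∀ x ∈ A, I x ⊆ E) (hJ : ∀ x ∈ A, J x ⊆ E)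
    (g : ι → ι → ℝ) :
    ∑ x ∈ A, ∑ e ∈ I x, ∑ f ∈ J x with f ≠ e, g e f =
      ∑ e ∈ E, ∑ f ∈ E with f ≠ e, incidenceCount A (fun x => I x ×ˢ J x) (e, f) * g e f := by
  have h := sum_sum_eq_sum_incidenceCount_mul (I := fun x => I x ×ˢ J x) (E := E ×ˢ E)
    (fun x hx => product_subset_product (hI x hx) (hJ x hx))
    fun z => if z.2 ≠ z.1 then g z.1 z.2 else 0
  simpa only [sum_product, sum_filter, mul_ite, mul_zero] using h

lemma incidenceCount_prod_le_left (A : Finset κ) (I J : κ → Finset ι) (e f : ι) :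
    incidenceCount A (fun x => I x ×ˢ J x) (e, f) ≤ incidenceCount A I e :=
  card_le_card <| monotone_filter_right A fun _ _ h => (mem_product.1 h).1

lemma incidenceCount_prod_swap (A : Finset κ) (I J : κ → Finset ι) (e f : ι) :
    incidenceCount A (fun x => I x ×ˢ J x) (e, f) =
      incidenceCount A (fun x => J x ×ˢ I x) (f, e) := by
  simp only [incidenceCount, mem_product, and_comm]

lemma sum_incidenceCount_prod_le (E : Finset ι) (hJb : ∀ x ∈ A, #(J x) ≤ b) {e : ι}
    (hId : incidenceCount A I e ≤ d) :
    ∑ f ∈ E, incidenceCount A (fun x => I x ×ˢ J x) (e, f) ≤ d * b := by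
  have hswap := sum_card_bipartiteAbove_eq_sum_card_bipartiteBelow (s := E)
    (t := {x ∈ A | e ∈ I x}) fun f x => f ∈ J x
  calc ∑ f ∈ E, incidenceCount A (fun x => I x ×ˢ J x) (e, f)
      = ∑ x ∈ A with e ∈ I x, #{f ∈ E | f ∈ J x} := by
        simpa only [incidenceCount, bipartiteAbove, bipartiteBelow, filter_filter, mem_product]
          using hswap
    _ ≤ ∑ x ∈ A with e ∈ I x, b := sum_le_sum fun x hx =>
        (card_le_card fun f hf => (mem_filter.1 hf).2).trans (hJb x (mem_filter.1 hx).1)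
    _ = incidenceCount A I e * b := by rw [sum_const, smul_eq_mul, incidenceCount]
    _ ≤ d * b := by gcongr

lemma sum_sq_symm_incidenceCount_prod_le (E : Finset ι) (hIb : ∀ x ∈ A, #(I x) ≤ b)
    (hJb : ∀ x ∈ A, #(J x) ≤ b) {e : ι} (hId : incidenceCount A I e ≤ d)
    (hJd : incidenceCount A J e ≤ d) :
    ∑ f ∈ E, (incidenceCount A (fun x => I x ×ˢ J x) (e, f) +
      incidenceCount A (fun x => I x ×ˢ J x) (f, e)) ^ 2 ≤ 4 * d ^ 2 * b := by
  simp only [incidenceCount_prod_swap A I J _ e]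
  have hsum := add_le_add (sum_incidenceCount_prod_le E hJb hId)
    (sum_incidenceCount_prod_le E hIb hJd)
  have hterm (f : ι) : incidenceCount A (fun x => I x ×ˢ J x) (e, f) +
      incidenceCount A (fun x => J x ×ˢ I x) (e, f) ≤ 2 * d := by
    linarith [(incidenceCount_prod_le_left A I J e f).trans hId,
      (incidenceCount_prod_le_left A J I e f).trans hJd]
  calc _ ≤ ∑ f ∈ E, 2 * d * (incidenceCount A (fun x => I x ×ˢ J x) (e, f) +
          incidenceCount A (fun x => J x ×ˢ I x) (e, f)) := sum_le_sum fun f _ => by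
        rw [sq]
        exact Nat.mul_le_mul_right _ (hterm f)
    _ ≤ 2 * d * (d * b + d * b) := by
        rw [← mul_sum, sum_add_distrib]
        gcongr
    _ = 4 * d ^ 2 * b := by ring

end Incidence

section CentredCount

variable {κ ι : Type*}

/-- The number of elements of `K` in the random set `s`, centred at its mean. -/
def centredCount (p : ℝ) (K : Finset ι) (s : Set ι) : ℝ := ∑ e ∈ K, centredIndicator p e s

lemma card_filter_mem_eq_centredCount_add (p : ℝ) (K : Finset ι) (s : Set ι)
    [DecidablePred (· ∈ s)] : (#{e ∈ K | e ∈ s} : ℝ) = centredCount p K s + p * #K := by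
  simp [centredCount, centredIndicator, Set.indicator_apply, mul_comm]

variable [DecidableEq ι]

/-- The off-diagonal part of `centredCount p K s * centredCount p L s`. -/
def centredCross (p : ℝ) (K L : Finset ι) (s : Set ι) : ℝ :=
  ∑ e ∈ K, ∑ f ∈ L with f ≠ e, centredIndicator p e s * centredIndicator p f s

lemma centredCount_mul (p : ℝ) (K L : Finset ι) (s : Set ι) :
    centredCount p K s * centredCount p L s =
      p * (1 - p) * #(K ∩ L) + (1 - 2 * p) * centredCount p (K ∩ L) s + centredCross p K L s := by
  let X : ι → ℝ := fun e => centredIndicator p e s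
  have hdiag : ∑ e ∈ K, ∑ f ∈ L with f = e, X e * X f = ∑ e ∈ K ∩ L, X e ^ 2 := by
    rw [← filter_mem_eq_inter, sum_filter]
    refine sum_congr rfl fun e _ => ?_
    rw [filter_eq']
    split_ifs <;> simp [sq]
  have hsq : ∑ e ∈ K ∩ L, X e ^ 2 =
      p * (1 - p) * #(K ∩ L) + (1 - 2 * p) * centredCount p (K ∩ L) s := by
    simp only [X, sq_centredIndicator, sum_add_distrib, ← mul_sum, centredCount, sum_const,
      nsmul_eq_mul]
    ring
  rw [← hsq, ← hdiag, centredCount, centredCount, sum_mul_sum, centredCross, ← sum_add_distrib]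
  exact sum_congr rfl fun e _ => (sum_filter_add_sum_filter_not L (· = e) _).symm

variable {A : Finset κ} {I J : κ → Finset ι} {E : Finset ι} {d : ℕ} {N t : ℝ} {u : Set ι}
  (p : unitInterval)

lemma measureReal_lt_abs_sum_centredCount_le (hEu : ↑E ⊆ u) (hEN : #E ≤ N)
    (hI : ∀ x ∈ A, I x ⊆ E) (hId : ∀ e ∈ E, incidenceCount A I e ≤ d) (ht : 0 ≤ t) :
    setBer(u, p).real {s | t < |∑ x ∈ A, centredCount p (I x) s|} ≤
      2 * Real.exp (-2 * t ^ 2 / (d ^ 2 * N)) := by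
  have hV : ∑ e ∈ E, (incidenceCount A I e : ℝ) ^ 2 ≤ d ^ 2 * N := by
    calc ∑ e ∈ E, (incidenceCount A I e : ℝ) ^ 2 ≤ ∑ e ∈ E, (d : ℝ) ^ 2 :=
          sum_le_sum fun e he => by gcongr; exact hId e he
      _ = d ^ 2 * #E := by rw [sum_const, nsmul_eq_mul, mul_comm]
      _ ≤ d ^ 2 * N := by gcongr
  have htail := measureReal_lt_abs_linearForm_le (iIndepFun_centredIndicator u p p)
    (fun e he => hasSubgaussianMGF_centredIndicator (hEu he)) _ hV ht
  simp only [centredCount, sum_sum_eq_sum_incidenceCount_mul hI]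
  convert htail using 3
  push_cast
  ring

lemma measureReal_lt_abs_sum_centredCross_le {b : ℕ} {r T : ℝ} (hEu : ↑E ⊆ u) (hEN : #E ≤ N)
    (hI : ∀ x ∈ A, I x ⊆ E) (hJ : ∀ x ∈ A, J x ⊆ E)
    (hId : ∀ e ∈ E, incidenceCount A I e ≤ d) (hJd : ∀ e ∈ E, incidenceCount A J e ≤ d)
    (hIb : ∀ x ∈ A, #(I x) ≤ b) (hJb : ∀ x ∈ A, #(J x) ≤ b) (hbr : b ≤ r) (hT : 0 ≤ T)
    (ht : 0 ≤ t) :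
    setBer(u, p).real {s | t < |∑ x ∈ A, centredCross p (I x) (J x) s|} ≤
      #E * (2 * Real.exp (-T ^ 2 / (2 * d ^ 2 * r))) +
        2 * Real.exp (-2 * t ^ 2 / (N * T ^ 2)) := by
  let M : ι → ι → ℝ := fun e f => incidenceCount A (fun x => I x ×ˢ J x) (e, f)
  have hR (e : ι) (he : e ∈ E) : ∑ f ∈ E, (M e f + M f e) ^ 2 ≤ 4 * d ^ 2 * r := by
    have hb : ∑ f ∈ E, (M e f + M f e) ^ 2 ≤ (4 * d ^ 2 * b : ℝ) := by
      simp only [M]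
      exact_mod_cast sum_sq_symm_incidenceCount_prod_le E hIb hJb (hId e he) (hJd e he)
    exact hb.trans (by gcongr)
  have hV : #E * T ^ 2 ≤ N * T ^ 2 := by gcongr
  have htail := measureReal_lt_abs_offDiagForm_le (measurable_centredIndicator p)
    (iIndepFun_centredIndicator u p p)
    (fun e he => hasSubgaussianMGF_centredIndicator (hEu he)) M hR hT hV ht
  simp only [centredCross, sum_sum_sum_ne_eq_sum_incidenceCount_mul hI hJ]
  refine htail.trans_eq ?_
  push_cast
  ring_nf

lemma abs_Covu_centredCount_sub_le {m : ℕ} {y : ℝ} {s : Set ι} (hA : A.Nonempty) (hAN : #A ≤ N)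
    (hm : ∀ x ∈ A, #(I x ∩ J x) = m) (hy : 1 ≤ y)
    (hI : |∑ x ∈ A, centredCount p (I x) s| ≤ #A * y)
    (hJ : |∑ x ∈ A, centredCount p (J x) s| ≤ #A * y)
    (hIJ : |∑ x ∈ A, centredCount p (I x ∩ J x) s| ≤ #A * y)
    (hcross : |∑ x ∈ A, centredCross p (I x) (J x) s| ≤ #A * (√(#A : ℝ) * y ^ 2)) :
    |Covu A (fun x => centredCount p (I x) s) (fun x => centredCount p (J x) s) -
      p * (1 - p) * m| ≤ 3 * √N * y ^ 2 := by
  have ha : (1 : ℝ) ≤ #A := mod_cast hA.card_pos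
  have hp : |1 - 2 * (p : ℝ)| ≤ 1 := abs_le.2 ⟨by linarith [p.2.2], by linarith [p.2.1]⟩
  have hprod : ∑ x ∈ A, centredCount p (I x) s * centredCount p (J x) s =
      #A * (p * (1 - p) * m) + (1 - 2 * p) * ∑ x ∈ A, centredCount p (I x ∩ J x) s +
        ∑ x ∈ A, centredCross p (I x) (J x) s := by
    simp only [centredCount_mul, sum_add_distrib, ← mul_sum]
    rw [← nsmul_eq_mul, ← sum_const, mul_sum,
      sum_congr rfl fun x hx => by rw [hm x hx]]
  set L := ∑ x ∈ A, centredCount p (I x ∩ J x) s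
  set Q := ∑ x ∈ A, centredCross p (I x) (J x) s
  have hmain : |((1 - 2 * p) * L + Q) / #A| ≤ y + √(#A : ℝ) * y ^ 2 := by
    rw [abs_div, Nat.abs_cast, div_le_iff₀ (by positivity)]
    calc |(1 - 2 * p) * L + Q| ≤ |1 - 2 * (p : ℝ)| * |L| + |Q| := by
          rw [← abs_mul]
          exact abs_add_le _ _
      _ ≤ 1 * (#A * y) + #A * (√(#A : ℝ) * y ^ 2) := by gcongr
      _ = (y + √(#A : ℝ) * y ^ 2) * #A := by ring
  have hmean {K : κ → Finset ι} (hK : |∑ x ∈ A, centredCount p (K x) s| ≤ #A * y) :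
      |Exu A fun x => centredCount p (K x) s| ≤ y := by
    rw [Exu, abs_div, Nat.abs_cast, div_le_iff₀ (by positivity), mul_comm y]
    exact hK
  have hcov : Covu A (fun x => centredCount p (I x) s) (fun x => centredCount p (J x) s) -
      p * (1 - p) * m = ((1 - 2 * p) * L + Q) / #A -
        (Exu A fun x => centredCount p (I x) s) * Exu A fun x => centredCount p (J x) s := by
    rw [Covu, Exu, hprod]
    field_simp
    ring
  have hsqrt : √(#A : ℝ) ≤ √N := Real.sqrt_le_sqrt hAN
  have hone : 1 ≤ √N := (Real.one_le_sqrt.2 ha).trans hsqrt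
  calc |Covu A (fun x => centredCount p (I x) s) (fun x => centredCount p (J x) s) -
        p * (1 - p) * m|
      ≤ (y + √(#A : ℝ) * y ^ 2) + y * y := by
        rw [hcov]
        refine (abs_sub _ _).trans (add_le_add hmain ?_)
        rw [abs_mul]
        exact mul_le_mul (hmean hI) (hmean hJ) (abs_nonneg _) (by positivity)
    _ ≤ 1 * y ^ 2 + √N * y ^ 2 + 1 * y ^ 2 := by
        nlinarith [mul_le_mul_of_nonneg_right hsqrt (sq_nonneg y)]
    _ ≤ 3 * √N * y ^ 2 := by
        nlinarith [mul_le_mul_of_nonneg_right hone (sq_nonneg y)]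

end CentredCount

section CovarianceTail

variable {κ ι : Type*} [DecidableEq ι] {A : Finset κ} {I J : κ → Finset ι} {E : Finset ι}
  {δ y : ℝ} {u : Set ι} (p : unitInterval)

lemma incidenceCount_mono (h : ∀ x ∈ A, I x ⊆ J x) (e : ι) :
    incidenceCount A I e ≤ incidenceCount A J e :=
  card_le_card fun x hx => by
    rw [mem_filter] at hx ⊢
    exact ⟨hx.1, h x hx.1 hx.2⟩

lemma measureReal_lt_abs_sum_centredCount_le_exp (hA : A.Nonempty) (hδ : 0 < δ) (hEu : ↑E ⊆ u)
    (hEA : #E ≤ (#A : ℝ) ^ 2 / δ) (hI : ∀ x ∈ A, I x ⊆ E)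
    (hI2 : ∀ e ∈ E, incidenceCount A I e ≤ 2) (hy : 0 ≤ y) :
    setBer(u, p).real {s | #A * y < |∑ x ∈ A, centredCount p (I x) s|} ≤
      2 * Real.exp (-δ * y ^ 2 / 8) := by
  have : (0 : ℝ) < #A := mod_cast hA.card_pos
  refine (measureReal_lt_abs_sum_centredCount_le p hEu hEA hI hI2 (by positivity)).trans ?_
  have hexp : -2 * (#A * y) ^ 2 / ((2 : ℕ) ^ 2 * ((#A : ℝ) ^ 2 / δ)) = -δ * y ^ 2 / 2 := by
    push_cast
    field_simp
  rw [hexp]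
  have hδy : 0 ≤ δ * y ^ 2 := by positivity
  gcongr 2 * Real.exp ?_
  linarith

lemma measureReal_lt_abs_sum_centredCross_le_exp {b : ℕ} (hA : A.Nonempty) (hδ : 0 < δ)
    (hEu : ↑E ⊆ u) (hEA : #E ≤ (#A : ℝ) ^ 2 / δ) (hI : ∀ x ∈ A, I x ⊆ E) (hJ : ∀ x ∈ A, J x ⊆ E)
    (hI2 : ∀ e ∈ E, incidenceCount A I e ≤ 2) (hJ2 : ∀ e ∈ E, incidenceCount A J e ≤ 2)
    (hIb : ∀ x ∈ A, #(I x) ≤ b) (hJb : ∀ x ∈ A, #(J x) ≤ b) (hbA : b ≤ #A / δ) (hy : 0 < y) :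
    setBer(u, p).real
        {s | #A * (√(#A : ℝ) * y ^ 2) < |∑ x ∈ A, centredCross p (I x) (J x) s|} ≤
      (2 * #E + 2) * Real.exp (-δ * y ^ 2 / 8) := by
  have ha : (0 : ℝ) < #A := mod_cast hA.card_pos
  have hsq : √(#A : ℝ) ^ 2 = #A := Real.sq_sqrt ha.le
  have htail := measureReal_lt_abs_sum_centredCross_le (T := √(#A : ℝ) * y)
    (t := #A * (√(#A : ℝ) * y ^ 2)) p hEu hEA hI hJ hI2 hJ2 hIb hJb hbA (by positivity)
    (by positivity)
  have hrow : -(√(#A : ℝ) * y) ^ 2 / (2 * (2 : ℕ) ^ 2 * (#A / δ)) = -δ * y ^ 2 / 8 := by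
    rw [mul_pow, hsq]
    push_cast
    field_simp
    ring
  have htrunc : -2 * (#A * (√(#A : ℝ) * y ^ 2)) ^ 2 / ((#A : ℝ) ^ 2 / δ * (√(#A : ℝ) * y) ^ 2) ≤
      -δ * y ^ 2 / 8 := by
    calc _ = -2 * δ * y ^ 2 := by
          simp only [mul_pow, hsq]
          field_simp
      _ ≤ -δ * y ^ 2 / 8 := by nlinarith [mul_nonneg hδ.le (sq_nonneg y)]
  rw [hrow] at htail
  calc _ ≤ #E * (2 * Real.exp (-δ * y ^ 2 / 8)) + 2 * Real.exp (-δ * y ^ 2 / 8) :=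
        htail.trans (by gcongr)
    _ = _ := by ring

lemma measureReal_lt_abs_Covu_centredCount_sub_le {b m : ℕ} {N : ℝ} (hA : A.Nonempty)
    (hAN : #A ≤ N) (hδ : 0 < δ) (hEu : ↑E ⊆ u) (hEA : #E ≤ (#A : ℝ) ^ 2 / δ)
    (hI : ∀ x ∈ A, I x ⊆ E) (hJ : ∀ x ∈ A, J x ⊆ E)
    (hI2 : ∀ e ∈ E, incidenceCount A I e ≤ 2) (hJ2 : ∀ e ∈ E, incidenceCount A J e ≤ 2)
    (hIb : ∀ x ∈ A, #(I x) ≤ b) (hJb : ∀ x ∈ A, #(J x) ≤ b) (hbA : b ≤ #A / δ)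
    (hm : ∀ x ∈ A, #(I x ∩ J x) = m) (hy : 1 ≤ y) :
    setBer(u, p).real {s | 3 * √N * y ^ 2 <
        |Covu A (fun x => centredCount p (I x) s) (fun x => centredCount p (J x) s) -
          p * (1 - p) * m|} ≤ (2 * #E + 8) * Real.exp (-δ * y ^ 2 / 8) := by
  have hy0 : 0 < y := one_pos.trans_le hy
  let linear (K : κ → Finset ι) : Set (Set ι) :=
    {s | #A * y < |∑ x ∈ A, centredCount p (K x) s|}
  let cross : Set (Set ι) :=
    {s | #A * (√(#A : ℝ) * y ^ 2) < |∑ x ∈ A, centredCross p (I x) (J x) s|}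
  have hlinear {K : κ → Finset ι} (hK : ∀ x ∈ A, K x ⊆ E)
      (hK2 : ∀ e ∈ E, incidenceCount A K e ≤ 2) :
      setBer(u, p).real (linear K) ≤ 2 * Real.exp (-δ * y ^ 2 / 8) :=
    measureReal_lt_abs_sum_centredCount_le_exp p hA hδ hEu hEA hK hK2 hy0.le
  have hcross : setBer(u, p).real cross ≤ (2 * #E + 2) * Real.exp (-δ * y ^ 2 / 8) :=
    measureReal_lt_abs_sum_centredCross_le_exp p hA hδ hEu hEA hI hJ hI2 hJ2 hIb hJb hbA hy0
  have hIJ := hlinear (K := fun x => I x ∩ J x) (fun x hx => inter_subset_left.trans (hI x hx))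
    fun e he => (incidenceCount_mono (fun _ _ => inter_subset_left) e).trans (hI2 e he)
  have hcover : {s | 3 * √N * y ^ 2 <
      |Covu A (fun x => centredCount p (I x) s) (fun x => centredCount p (J x) s) -
        p * (1 - p) * m|} ⊆ (linear I ∪ linear J) ∪ (linear (fun x => I x ∩ J x) ∪ cross) := by
    intro s hs
    contrapose! hs
    simp only [Set.mem_union, not_or, linear, cross, Set.mem_ofPred_eq, not_lt] at hs ⊢
    exact abs_Covu_centredCount_sub_le p hA hAN hm hy hs.1.1 hs.1.2 hs.2.1 hs.2.2
  linarith [measureReal_mono (μ := setBer(u, p)) hcover,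
    measureReal_union_le (μ := setBer(u, p)) (linear I ∪ linear J)
      (linear (fun x => I x ∩ J x) ∪ cross),
    measureReal_union_le (μ := setBer(u, p)) (linear I) (linear J),
    measureReal_union_le (μ := setBer(u, p)) (linear fun x => I x ∩ J x) cross,
    hlinear hI hI2, hlinear hJ hJ2]

end CovarianceTail

section Stars

variable {n : ℕ}

/-- The edges of the complete graph on `[n]` that join `x` to a vertex of `B`. -/
def starEdges (x : Fin n) (B : Finset (Fin n)) : Finset (Sym2 (Fin n)) :=
  (B.erase x).image fun y => s(x, y)

lemma starEdges_subset_completeEdges (x : Fin n) (B : Finset (Fin n)) :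
    starEdges x B ⊆ completeEdges n := by
  simp only [starEdges, image_subset_iff, mem_erase, completeEdges, mem_filter_univ,
    Sym2.mk_isDiag_iff]
  exact fun y hy => hy.1.symm

lemma starEdges_mono (x : Fin n) {B B' : Finset (Fin n)} (h : B ⊆ B') :
    starEdges x B ⊆ starEdges x B' :=
  image_subset_image (erase_subset_erase x h)

lemma mk_right_injective (x : Fin n) : Function.Injective fun y => s(x, y) :=
  fun _ _ => Sym2.congr_right.1

lemma card_starEdges (x : Fin n) (B : Finset (Fin n)) : #(starEdges x B) = #(B.erase x) :=
  card_image_of_injective _ (mk_right_injective x)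

lemma starEdges_inter (x : Fin n) (B B' : Finset (Fin n)) :
    starEdges x B ∩ starEdges x B' = starEdges x (B ∩ B') := by
  rw [starEdges, starEdges, ← image_inter _ _ (mk_right_injective x), starEdges]
  congr 1
  grind

lemma incidenceCount_starEdges_le (A B : Finset (Fin n)) (e : Sym2 (Fin n)) :
    incidenceCount A (starEdges · B) e ≤ 2 := by
  induction e with | _ a b
  refine (card_le_card (t := {a, b}) fun x hx => ?_).trans card_le_two
  obtain ⟨y, -, hy⟩ := mem_image.1 (mem_filter.1 hx).2
  have hmem : x ∈ s(a, b) := hy ▸ Sym2.mem_mk_left x y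
  simpa using hmem

lemma card_completeEdges_le (n : ℕ) : #(completeEdges n) ≤ n ^ 2 :=
  calc #(completeEdges n) ≤ Fintype.card (Sym2 (Fin n)) := card_le_univ _
    _ ≤ Fintype.card (Fin n × Fin n) :=
        Fintype.card_le_of_surjective (Quot.mk _) Quot.mk_surjective
    _ = n ^ 2 := by simp [sq]

lemma dS_eq_centredCount_add {s : Set (Sym2 (Fin n))} (hs : s ⊆ completeEdges n) (p : ℝ)
    (B : Finset (Fin n)) (x : Fin n) :
    (dS s.toFinite.toFinset B x : ℝ) =
      centredCount p (starEdges x B) s + p * #(B.erase x) := by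
  classical
  have hloop : s(x, x) ∉ s := fun h => by simpa [completeEdges] using hs h
  have hdS : dS s.toFinite.toFinset B x = #{e ∈ starEdges x B | e ∈ s} := by
    rw [starEdges, filter_image, card_image_of_injective _ (mk_right_injective x), dS]
    congr 1
    grind [Set.Finite.mem_toFinset]
  rw [hdS, card_filter_mem_eq_centredCount_add, card_starEdges]

lemma Covu_dS_eq_Covu_centredCount {s : Set (Sym2 (Fin n))} (hs : s ⊆ completeEdges n) (p : ℝ)
    {A B B' : Finset (Fin n)} (hA : A.Nonempty) {b b' : ℕ} (hb : ∀ x ∈ A, #(B.erase x) = b)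
    (hb' : ∀ x ∈ A, #(B'.erase x) = b') :
    Covu A (fun x => dS s.toFinite.toFinset B x) (fun x => dS s.toFinite.toFinset B' x) =
      Covu A (fun x => centredCount p (starEdges x B) s)
        (fun x => centredCount p (starEdges x B') s) := by
  rw [Covu_congr (f' := fun x => centredCount p (starEdges x B) s + p * b)
    (g' := fun x => centredCount p (starEdges x B') s + p * b')
    (fun x hx => by rw [dS_eq_centredCount_add hs p, hb x hx])
    (fun x hx => by rw [dS_eq_centredCount_add hs p, hb' x hx]),
    Covu_add_const_left hA, Covu_comm, Covu_add_const_left hA, Covu_comm]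

lemma PrGnp_lt_abs_Covu_dS_sub_le (p : unitInterval) {δ y : ℝ} (hδ : 0 < δ) (hy : 1 ≤ y)
    {A B B' : Finset (Fin n)} {b b' m : ℕ} (hA : A.Nonempty)
    (hBA : δ * #(B ∪ B') ≤ #A) (hb : ∀ x ∈ A, #(B.erase x) = b)
    (hb' : ∀ x ∈ A, #(B'.erase x) = b') (hm : ∀ x ∈ A, #((B ∩ B').erase x) = m) :
    PrGnp n p (fun G => 3 * √(n : ℝ) * y ^ 2 <
        |Covu A (fun x => dS G B x) (fun x => dS G B' x) - p * (1 - p) * m|) ≤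
      10 * n ^ 2 * Real.exp (-δ * y ^ 2 / 8) := by
  let E := A.biUnion fun x => starEdges x (B ∪ B')
  have hEn : E ⊆ completeEdges n := biUnion_subset.2 fun x _ => starEdges_subset_completeEdges x _
  have hsub {D : Finset (Fin n)} (hD : D ⊆ B ∪ B') (x : Fin n) (hx : x ∈ A) : starEdges x D ⊆ E :=
    (starEdges_mono x hD).trans (subset_biUnion_of_mem (fun x => starEdges x (B ∪ B')) hx)
  have hcard {D : Finset (Fin n)} (hD : D ⊆ B ∪ B') (x : Fin n) : #(starEdges x D) ≤ #(B ∪ B') :=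
    (card_starEdges x D).trans_le (card_erase_le.trans (card_le_card hD))
  have hbA : #(B ∪ B') ≤ #A / δ := by rwa [le_div_iff₀ hδ, mul_comm]
  have hEA : #E ≤ (#A : ℝ) ^ 2 / δ :=
    calc (#E : ℝ) ≤ #A * #(B ∪ B') := mod_cast card_biUnion_le_card_mul _ _ _ fun x _ =>
          hcard subset_rfl x
      _ ≤ #A * (#A / δ) := by gcongr
      _ = (#A : ℝ) ^ 2 / δ := by ring
  have hn : (#A : ℝ) ≤ n := mod_cast (card_le_univ A).trans_eq (Fintype.card_fin n)
  have hn1 : (1 : ℝ) ≤ n := le_trans (mod_cast hA.card_pos) hn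
  have hEsq : (#E : ℝ) ≤ n ^ 2 := mod_cast (card_le_card hEn).trans (card_completeEdges_le n)
  have htail := measureReal_lt_abs_Covu_centredCount_sub_le (u := ↑(completeEdges n)) p hA hn hδ
    (mod_cast hEn) hEA (hsub subset_union_left) (hsub subset_union_right)
    (fun e _ => incidenceCount_starEdges_le A B e) (fun e _ => incidenceCount_starEdges_le A B' e)
    (fun x _ => hcard subset_union_left x) (fun x _ => hcard subset_union_right x) hbA
    (fun x hx => by rw [starEdges_inter, card_starEdges, hm x hx]) hy
  rw [PrGnp_eq_setBernoulli_real, measureReal_def, setBernoulli_apply_eq_apply_subsets,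
    ← measureReal_def]
  refine (measureReal_mono fun s hs => ?_).trans (htail.trans ?_)
  · obtain ⟨hbad, hsE⟩ := hs
    rwa [Set.mem_ofPred_eq, Covu_dS_eq_Covu_centredCount hsE p hA hb hb'] at hbad
  · gcongr
    nlinarith

end Stars

section Concentration

variable {n : ℕ} {δ : ℝ}

lemma one_sub_add_le_PrGnp (p : unitInterval) {P₁ P₂ P₃ Q : Finset (Sym2 (Fin n)) → Prop}
    {q₁ q₂ q₃ : ℝ} (h₁ : PrGnp n p P₁ ≤ q₁) (h₂ : PrGnp n p P₂ ≤ q₂) (h₃ : PrGnp n p P₃ ≤ q₃)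
    (h : ∀ G, ¬P₁ G → ¬P₂ G → ¬P₃ G → Q G) : 1 - (q₁ + q₂ + q₃) ≤ PrGnp n p Q := by
  simp only [PrGnp_eq_setBernoulli_real] at h₁ h₂ h₃ ⊢
  set μ := setBer((completeEdges n : Set (Sym2 (Fin n))), p)
  let event (P : Finset (Sym2 (Fin n)) → Prop) : Set (Set (Sym2 (Fin n))) :=
    {s | P s.toFinite.toFinset}
  have huniv : (1 : ℝ) ≤ μ.real (event Q ∪ (event P₁ ∪ (event P₂ ∪ event P₃))) := by
    rw [← probReal_univ (μ := μ)]
    refine measureReal_mono fun s _ => ?_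
    simp only [event, Set.mem_union, Set.mem_ofPred_eq]
    grind
  linarith [measureReal_union_le (μ := μ) (event Q) (event P₁ ∪ (event P₂ ∪ event P₃)),
    measureReal_union_le (μ := μ) (event P₁) (event P₂ ∪ event P₃),
    measureReal_union_le (μ := μ) (event P₂) (event P₃)]

/-- Inside `S` the variance is centred at `p * (1 - p) * (#S - 1)`, since `d_S(x)` then counts
`#S - 1` potential neighbours; the coefficient `4` absorbs the difference. -/
lemma PrGnp_degree_covariances_ge (p : unitInterval) (hδ : 0 < δ) {S : Finset (Fin n)}
    (hS : S.Nonempty) (hSn : #S ≤ (1 - δ) * n) {y : ℝ} (hy : 1 ≤ y) :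
    1 - 30 * n ^ 2 * Real.exp (-δ * y ^ 2 / 8) ≤ PrGnp n p fun G =>
      |Varu S (fun x => dS G S x) - p * (1 - p) * #S| ≤ 4 * √(n : ℝ) * y ^ 2 ∧
      |Varu Sᶜ (fun x => dS G S x) - p * (1 - p) * #S| ≤ 4 * √(n : ℝ) * y ^ 2 ∧
      |Covu Sᶜ (fun x => dS G S x) (fun x => dS G Sᶜ x)| ≤ 4 * √(n : ℝ) * y ^ 2 := by
  have hcard : (#S : ℝ) + #Sᶜ = n := mod_cast (card_add_card_compl S).trans (Fintype.card_fin n)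
  have hS1 : (1 : ℝ) ≤ #S := mod_cast hS.card_pos
  have hn1 : (1 : ℝ) ≤ n := by linarith [(#Sᶜ).cast_nonneg (α := ℝ)]
  have hδ1 : δ ≤ 1 := by nlinarith
  have hSc : δ * n ≤ #Sᶜ := by linarith
  have hScne : Sᶜ.Nonempty :=
    card_pos.1 (Nat.cast_pos.1 ((mul_pos hδ (one_pos.trans_le hn1)).trans_le hSc))
  have herase (x : Fin n) (hx : x ∈ Sᶜ) : #(S.erase x) = #S := by
    rw [erase_eq_of_notMem (mem_compl.1 hx)]
  have hSS := PrGnp_lt_abs_Covu_dS_sub_le p hδ hy (m := #S - 1) hS (by rw [union_self]; nlinarith)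
    (fun x hx => card_erase_of_mem hx) (fun x hx => card_erase_of_mem hx)
    fun x hx => by rw [inter_self, card_erase_of_mem hx]
  have hScS := PrGnp_lt_abs_Covu_dS_sub_le p hδ hy hScne (by rw [union_self]; nlinarith)
    herase herase (by simpa only [inter_self] using herase)
  have hScSSc := PrGnp_lt_abs_Covu_dS_sub_le p hδ hy (m := 0) hScne
    (by rwa [union_compl, card_univ, Fintype.card_fin]) herase (fun x hx => card_erase_of_mem hx)
    fun x _ => by simp
  have hscale : 1 ≤ √(n : ℝ) * y ^ 2 :=
    one_le_mul_of_one_le_of_one_le (Real.one_le_sqrt.2 hn1) (one_le_pow₀ hy)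
  have hp : |(p : ℝ) * (1 - p)| ≤ 1 := by
    obtain ⟨hp0, hp1⟩ := p.2
    exact abs_le.2 ⟨by nlinarith, by nlinarith⟩
  refine le_trans (by linarith)
    (one_sub_add_le_PrGnp p hSS hScS hScSSc fun G hV hV' hC => ?_)
  rw [not_lt] at hV hV' hC
  rw [Varu_eq_Covu hS, Varu_eq_Covu hScne]
  refine ⟨?_, hV'.trans (by linarith), ?_⟩
  · rw [Nat.cast_pred hS.card_pos] at hV
    calc _ = |Covu S (fun x => dS G S x) (fun x => dS G S x) - p * (1 - p) * (#S - 1) -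
          p * (1 - p)| := by ring_nf
      _ ≤ 3 * √(n : ℝ) * y ^ 2 + 1 := (abs_sub _ _).trans (add_le_add hV hp)
      _ ≤ 4 * √(n : ℝ) * y ^ 2 := by linarith
  · rw [Nat.cast_zero, mul_zero, sub_zero] at hC
    exact hC.trans (by linarith)

lemma eventually_mul_exp_rpow_le {ε : ℝ} (hδ : 0 < δ) (hε : 0 < ε) :
    ∀ᶠ n : ℕ in Filter.atTop,
      30 * (n : ℝ) ^ 2 * Real.exp (-δ * ((n : ℝ) ^ (ε / 2)) ^ 2 / 8) ≤
        Real.exp (-(n : ℝ) ^ (ε / 2)) := by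
  have hy : Filter.Tendsto (fun n : ℕ => (n : ℝ) ^ (ε / 2)) Filter.atTop Filter.atTop :=
    (tendsto_rpow_atTop (by positivity)).comp tendsto_natCast_atTop_atTop
  have hdecay := ((tendsto_rpow_mul_exp_neg_mul_atTop_nhds_zero (4 / ε) 1 one_pos).comp
    hy).eventually_le_const (show (0 : ℝ) < 1 / 30 by norm_num)
  filter_upwards [hdecay, hy.eventually_ge_atTop (16 / δ)] with n hpoly hlarge
  have hpow : ((n : ℝ) ^ (ε / 2)) ^ (4 / ε) = (n : ℝ) ^ 2 := by
    rw [← Real.rpow_mul n.cast_nonneg, ← Real.rpow_natCast]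
    congr 1
    push_cast
    field_simp
    norm_num
  simp only [Function.comp_apply, hpow] at hpoly
  set y := (n : ℝ) ^ (ε / 2)
  have hy2 : -δ * y ^ 2 / 8 ≤ -1 * y + -y := by
    rw [div_le_iff₀ hδ] at hlarge
    have : 0 ≤ y := by positivity
    nlinarith
  calc 30 * (n : ℝ) ^ 2 * Real.exp (-δ * y ^ 2 / 8)
      ≤ 30 * (n : ℝ) ^ 2 * Real.exp (-1 * y + -y) := by gcongr
    _ = 30 * (n ^ 2 * Real.exp (-1 * y)) * Real.exp (-y) := by
        rw [Real.exp_add]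
        ring
    _ ≤ 30 * (1 / 30) * Real.exp (-y) := by gcongr
    _ = Real.exp (-y) := by ring

end Concentration

theorem stmt_7_general (δ ε : ℝ) (hδ : 0 < δ) (hε : 0 < ε) :
    ∃ C > (0 : ℝ), ∃ η > (0 : ℝ), ∃ n₀ : ℕ, ∀ n ≥ n₀, ∀ p : ℝ, 0 ≤ p → p ≤ 1 →
      ∀ S : Finset (Fin n), S.Nonempty → #S ≤ (1 - δ) * n →
      PrGnp n p (fun G =>
          |Varu S (fun x => (dS G S x : ℝ)) - p * (1 - p) * #S| ≤ C * (n : ℝ) ^ (1 / 2 + ε) ∧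
          |Varu Sᶜ (fun x => (dS G S x : ℝ)) - p * (1 - p) * #S| ≤ C * (n : ℝ) ^ (1 / 2 + ε) ∧
          |Exu Sᶜ (fun x => (dS G S x : ℝ) * (dS G Sᶜ x : ℝ)) -
              Exu Sᶜ (fun x => (dS G S x : ℝ)) * Exu Sᶜ (fun x => (dS G Sᶜ x : ℝ))|
            ≤ C * (n : ℝ) ^ (1 / 2 + ε))
        ≥ 1 - Real.exp (-(n : ℝ) ^ η) := by
  obtain ⟨n₀, htail⟩ := Filter.eventually_atTop.1 (eventually_mul_exp_rpow_le hδ hε)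
  refine ⟨4, by norm_num, ε / 2, by positivity, n₀, fun n hn p hp0 hp1 S hS hSn => ?_⟩
  have hn0 : (0 : ℝ) < n := mod_cast (hS.card_pos.trans_le (card_le_univ S)).trans_eq
    (Fintype.card_fin n)
  have hn1 : (1 : ℝ) ≤ n := mod_cast hn0
  have hscale : 4 * √(n : ℝ) * ((n : ℝ) ^ (ε / 2)) ^ 2 = 4 * (n : ℝ) ^ (1 / 2 + ε) := by
    rw [Real.sqrt_eq_rpow, ← Real.rpow_mul_natCast hn0.le, mul_assoc, ← Real.rpow_add hn0]
    norm_num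
  have hprob := PrGnp_degree_covariances_ge ⟨p, hp0, hp1⟩ hδ hS hSn
    (Real.one_le_rpow hn1 (by positivity : 0 ≤ ε / 2))
  rw [hscale] at hprob
  exact (sub_le_sub_left (htail n hn) 1).trans hprob

/-- Lemma 2.5: concentration of degree variances/covariances.
Fix `δ, ε > 0`. There are `C > 0`, `η > 0`, `n₀` such that for all `n ≥ n₀`, `p ∈ [δ, 1-δ]`,
`k` with `k/n ∈ [δ, 1-δ]`, and any fixed `k`-set `S`, with probability at least
`1 - exp(-n^η)` over `G_{n,p}`, the three variance/covariance bounds hold (with `x` uniform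
on `S` and `x̄` uniform on `S̄`). -/
theorem stmt_7 (δ ε : ℝ) (hδ : 0 < δ) (hε : 0 < ε) :
    ∃ C > (0:ℝ), ∃ η > (0:ℝ), ∃ n₀ : ℕ, ∀ n ≥ n₀, ∀ p : ℝ, δ ≤ p → p ≤ 1 - δ →
      ∀ k : ℕ, δ ≤ (k:ℝ)/n → (k:ℝ)/n ≤ 1 - δ →
      ∀ S : Finset (Fin n), S.card = k →
      PrGnp n p (fun G =>
          |Varu S (fun x => (dS G S x : ℝ)) - p * (1 - p) * k| ≤ C * (n:ℝ) ^ ((1:ℝ)/2 + ε) ∧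
          |Varu Sᶜ (fun x => (dS G S x : ℝ)) - p * (1 - p) * k| ≤ C * (n:ℝ) ^ ((1:ℝ)/2 + ε) ∧
          |Exu Sᶜ (fun x => (dS G S x : ℝ) * (dS G Sᶜ x : ℝ)) -
              Exu Sᶜ (fun x => (dS G S x : ℝ)) * Exu Sᶜ (fun x => (dS G Sᶜ x : ℝ))|
            ≤ C * (n:ℝ) ^ ((1:ℝ)/2 + ε))
        ≥ 1 - Real.exp (-(n:ℝ) ^ η) := by
  obtain ⟨C, hC, η, hη, n₀, h⟩ := stmt_7_general δ ε hδ hε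
  refine ⟨C, hC, η, hη, n₀, fun n hn p hp hp' k hk hk' S hS => ?_⟩
  subst hS
  have hratio : (#S : ℝ) / n ≠ 0 := (hδ.trans_le hk).ne'
  have hn0 : (0 : ℝ) < n := Nat.cast_pos.2 (Nat.pos_of_ne_zero fun h0 => hratio (by simp [h0]))
  exact h n hn p (by linarith) (by linarith) S
    (nonempty_iff_ne_empty.2 fun h0 => hratio (by simp [h0])) ((div_le_iff₀ hn0).1 hk')
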